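/- Every natural tame path from v to w in a finite proper pre-cubical set with height function lies in some cube chain from v to w; i.e., the sets N(K,c) for c∈Ch(K)_v^w cover the space of natural tame paths. -/

import Mathlib

/-- A pre-cubical set: a family of sets of `n`-cubes with face maps
`dᵢᵉ : K[n+1] → K[n]` (indices `i` are 0-based here) satisfying the
pre-cubical relations `dᵢᵉ dⱼᶯ = dⱼ₋₁ᶯ dᵢᵉ` for `i < j`. -/
structure PCS where
  cube : ℕ → Type
  face : Bool → ∀ {n : ℕ}, Fin (n + 1) → cube (n + 1) → cube n
  comm : ∀ {n : ℕ} (ε η : Bool) (i : Fin (n + 1)) (j : Fin (n + 2)),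
    (i : ℕ) < (j : ℕ) → ∀ c : cube (n + 2),
    face ε i (face η j c) =
      face η ⟨(j : ℕ) - 1, by omega⟩ (face ε ⟨(i : ℕ), by omega⟩ c)

/-- The number of `*`'s (encoded as `none`) of a function `f : {1,…,n} → {0,1,*}`. -/
def numStars {n : ℕ} (f : Fin n → Option Bool) : ℕ := ∑ i, if f i = none then 1 else 0

lemma numStars_castSucc {n : ℕ} (f : Fin (n + 1) → Option Bool) :
    numStars f = numStars (f ∘ Fin.castSucc) + (if f (Fin.last n) = none then 1 else 0) := by
  unfold numStars
  rw [Fin.sum_univ_castSucc]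
  rfl

/-- Auxiliary for `dface`: the last `k` coordinates are untouched. -/
def PCS.dfaceAux (K : PCS) : ∀ (n k : ℕ) (f : Fin n → Option Bool),
    K.cube (n + k) → K.cube (numStars f + k)
  | 0, _, _, c => cast (congrArg K.cube (by simp [numStars])) c
  | n + 1, k, f, c =>
    match h : f (Fin.last n) with
    | some ε =>
        cast (congrArg K.cube (by rw [numStars_castSucc f, h]; simp))
          (K.dfaceAux n k (f ∘ Fin.castSucc)
            (K.face ε ⟨n, by omega⟩ (cast (congrArg K.cube (by omega)) c)))
    | none =>
        cast (congrArg K.cube (by rw [numStars_castSucc f, h]; simp; omega))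
          (K.dfaceAux n (k + 1) (f ∘ Fin.castSucc) (cast (congrArg K.cube (by omega)) c))

/-- `d_f(c)` : the composition `d₁^{f(1)} ⋯ d_n^{f(n)}` of face maps, where
`f i = some ε` means apply `dᵢᵉ` and `f i = none` means `dᵢ^*` (identity). -/
def PCS.dface (K : PCS) {n : ℕ} (f : Fin n → Option Bool) (c : K.cube n) :
    K.cube (numStars f) :=
  cast (congrArg K.cube (by omega)) (K.dfaceAux n 0 f (cast (congrArg K.cube (by omega)) c))

/-- `dᵉ(c)`: the extreme vertex of a cube. -/
def PCS.extreme (K : PCS) (ε : Bool) {n : ℕ} (c : K.cube n) : K.cube 0 :=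
  cast (congrArg K.cube (by simp [numStars])) (K.dface (fun _ => some ε) c)

/-- A pre-cubical set is proper if cubes are distinguished by their
pairs of extreme vertices. -/
def PCS.Proper (K : PCS) : Prop :=
  Function.Injective fun c : Σ n, K.cube n =>
    ({K.extreme false c.2, K.extreme true c.2} : Set (K.cube 0))

/-- `chainFrom K v cs w`: the list of (positive-dimensional) cubes `cs` is
a cube chain from the vertex `v` to the vertex `w`. -/
def PCS.chainFrom (K : PCS) : K.cube 0 → List (Σ n, K.cube (n + 1)) → K.cube 0 → Prop
  | v, [], w => v = w
  | v, c :: cs, w => K.extreme false c.2 = v ∧ K.chainFrom (K.extreme true c.2) cs w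

/-- The set of cube chains in `K` from `v` to `w`. -/
def CubeChain (K : PCS) (v w : K.cube 0) :=
  {cs : List (Σ n, K.cube (n + 1)) // K.chainFrom v cs w}

/-- `IsSplit K c c₁ c₂`: `(c₁, c₂) = (d⁰_Ā(c), d¹_A(c))` for some `∅ ≠ A ⊊ {1,…,n}`. -/
def PCS.IsSplit (K : PCS) {n : ℕ} (c : K.cube (n + 1)) (c₁ c₂ : Σ m, K.cube (m + 1)) : Prop :=
  ∃ A : Finset (Fin (n + 1)), A ≠ ∅ ∧ A ≠ Finset.univ ∧
    HEq c₁.2 (K.dface (fun i => if i ∈ A then none else some false) c) ∧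
    HEq c₂.2 (K.dface (fun i => if i ∈ A then some true else none) c)

/-- One splitting step `𝐜 ↦ d_{k,A}(𝐜)`: replace the `k`-th cube by its two halves. -/
def PCS.SplitStep (K : PCS) (cs cs' : List (Σ n, K.cube (n + 1))) : Prop :=
  ∃ (l₁ l₂ : List (Σ n, K.cube (n + 1))) (c c₁ c₂ : Σ n, K.cube (n + 1)),
    cs = l₁ ++ c :: l₂ ∧ cs' = l₁ ++ c₁ :: c₂ :: l₂ ∧ K.IsSplit c.2 c₁ c₂

/-- The relation on cube chains generated by `d_{k,A}(𝐜) ≤ 𝐜`. -/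
def chainLe {K : PCS} {v w : K.cube 0} (a b : CubeChain K v w) : Prop :=
  Relation.ReflTransGen (fun x y : CubeChain K v w => K.SplitStep y.1 x.1) a b

/-- A height function on `K`: `h(dᵢᵉ(c)) = h(c) + ε`. -/
def PCS.IsHeight (K : PCS) (h : ∀ {n : ℕ}, K.cube n → ℤ) : Prop :=
  ∀ {n : ℕ} (ε : Bool) (i : Fin (n + 1)) (c : K.cube (n + 1)),
    h (K.face ε i c) = h c + (if ε then 1 else 0)

/-- Cubes form a discrete space. -/
instance PCS.cubeTop (K : PCS) (n : ℕ) : TopologicalSpace (K.cube n) := ⊥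

/-- The disjoint union `∐ₙ K[n] × [0,1]ⁿ`. -/
def PCS.Pre (K : PCS) : Type := Σ n, K.cube n × (Fin n → unitInterval)

instance (K : PCS) : TopologicalSpace K.Pre := by unfold PCS.Pre; infer_instance

/-- The identifications `(dᵢᵉ(c), x) ∼ (c, δᵢᵉ(x))` of the geometric realization. -/
def PCS.geoRel (K : PCS) : K.Pre → K.Pre → Prop := fun x y =>
  ∃ (n : ℕ) (ε : Bool) (i : Fin (n + 1)) (c : K.cube (n + 1)) (t : Fin n → unitInterval),
    (x = ⟨n, K.face ε i c, t⟩ ∧ y = ⟨n + 1, c, i.insertNth (if ε then 1 else 0) t⟩) ∨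
    (y = ⟨n, K.face ε i c, t⟩ ∧ x = ⟨n + 1, c, i.insertNth (if ε then 1 else 0) t⟩)

/-- The geometric realization `|K|` (as a topological space). -/
def PCS.Geo (K : PCS) : Type := Quot K.geoRel

instance (K : PCS) : TopologicalSpace K.Geo := by unfold PCS.Geo; infer_instance

/-- The point of `|K|` corresponding to a vertex. -/
def PCS.vpt (K : PCS) (u : K.cube 0) : K.Geo :=
  Quot.mk K.geoRel ⟨0, u, Fin.elim0⟩

/-- `|c| ⊆ |K|`, the (closed) geometric cube of a cube `c`. -/
def PCS.cubeSet (K : PCS) {n : ℕ} (c : K.cube n) : Set K.Geo :=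
  Set.range fun x : Fin n → unitInterval => Quot.mk K.geoRel ⟨n, c, x⟩

/-- A directed path on `|K|` defined on `[a,b]`: continuous, and piecewise of
the form `α(s) = (cⱼ, βⱼ(s))` with all coordinates of `βⱼ` non-decreasing. -/
def PCS.IsDPathOn (K : PCS) (α : ℝ → K.Geo) (a b : ℝ) : Prop :=
  ContinuousOn α (Set.Icc a b) ∧
  ∃ (m : ℕ) (t : Fin (m + 1) → ℝ), Monotone t ∧ t 0 = a ∧ t (Fin.last m) = b ∧
    ∀ j : Fin m, ∃ (n : ℕ) (c : K.cube n) (β : ℝ → Fin n → unitInterval),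
      (∀ i : Fin n,
        MonotoneOn (fun s => (β s i : ℝ)) (Set.Icc (t j.castSucc) (t j.succ))) ∧
      ∀ s ∈ Set.Icc (t j.castSucc) (t j.succ), α s = Quot.mk K.geoRel ⟨n, c, β s⟩

/-- `α` is natural on `[a,b]`: the height of `α(s)` equals `s`
(stated for every representative of `α(s)`). -/
def PCS.NaturalOn (K : PCS) (h : ∀ {n : ℕ}, K.cube n → ℤ) (α : ℝ → K.Geo)
    (a b : ℝ) : Prop :=
  ∀ s ∈ Set.Icc a b, ∀ (n : ℕ) (c : K.cube n) (x : Fin n → unitInterval),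
    Quot.mk K.geoRel ⟨n, c, x⟩ = α s → (h c : ℝ) + ∑ i, (x i : ℝ) = s

/-- `α` is tame on `[a,b]`: each segment either stays in a single cube or
passes through a vertex. -/
def PCS.TameOn (K : PCS) (α : ℝ → K.Geo) (a b : ℝ) : Prop :=
  ∀ s t : ℝ, a ≤ s → s < t → t ≤ b →
    (∃ (n : ℕ) (c : K.cube n), Set.MapsTo α (Set.Icc s t) (K.cubeSet c)) ∨
    (∃ u : K.cube 0, K.vpt u ∈ α '' Set.Icc s t)

/-- A natural tame (directed) path in `|K|` from `v` to `w`, where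
`h(v) = 0` and `h(w) = N`. -/
def PCS.NatTamePath (K : PCS) (h : ∀ {n : ℕ}, K.cube n → ℤ) (v w : K.cube 0)
    (N : ℕ) (α : ℝ → K.Geo) : Prop :=
  K.IsDPathOn α 0 N ∧ α 0 = K.vpt v ∧ α N = K.vpt w ∧
    K.NaturalOn h α 0 N ∧ K.TameOn α 0 N

/-- `b_i`, the partial sums of the dimensions of the cubes of a chain. -/
def bsum {K : PCS} (cs : List (Σ n, K.cube (n + 1))) (i : ℕ) : ℝ :=
  ((cs.take i).map fun c => (c.1 : ℝ) + 1).sum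

/-- `α` lies in the cube chain `cs`: `α([b_{i−1}, b_i]) ⊆ |cᵢ|`. -/
def PCS.liesIn (K : PCS) (α : ℝ → K.Geo) (cs : List (Σ n, K.cube (n + 1))) : Prop :=
  ∀ (i : ℕ) (hi : i < cs.length),
    Set.MapsTo α (Set.Icc (bsum cs i) (bsum cs (i + 1)))
      (K.cubeSet (cs.get ⟨i, hi⟩).2)

/-!
Call the carrier of a point of `|K|` the cell containing it in its interior. A directed path can
only pass from a cell to a cell of which it is a lower face, keeping the initial vertex of the
carrier, and from a cell to one of its upper faces, keeping the final vertex. Properness makes the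
face of a cube spanned by two of its vertices independent of the cube. Hence, as long as the path
stays in a cube `c`, the initial and final vertices of its carrier only move up along faces of `c`,
and the path stays in the face of `c` spanned by the initial vertex at the beginning and the final
vertex at the end.

Between two consecutive vertices `u`, `u'` of a natural tame path, tameness puts every smaller
closed interval in one cube. If that interval is close enough to the whole, the initial vertex at
its beginning is `u` and the final vertex at its end is `u'`, so the face just described does not
depend on the interval and contains the whole segment. By naturality vertices are met at integer
times and the dimension of this face is the length of the segment; the faces form the cube chain.
-/

open Filter Set Topology unitInterval

section Order

/-- The supremum of `{x ∈ [a, b] | r a x}` is attained by `hleft` and equals `b` by `hright`. -/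
theorem rel_of_eventually_nhdsGT_nhdsLT {X : Type*} [ConditionallyCompleteLinearOrder X]
    [TopologicalSpace X] [OrderTopology X] [DenselyOrdered X] {r : X → X → Prop} {a b : X}
    (hab : a ≤ b) (hrefl : r a a) (htrans : ∀ ⦃x y z⦄, r x y → r y z → r x z)
    (hright : ∀ x ∈ Ico a b, ∀ᶠ y in 𝓝[>] x, r x y)
    (hleft : ∀ x ∈ Ioc a b, ∀ᶠ y in 𝓝[<] x, r y x) : r a b := by
  have haS : a ∈ {x ∈ Icc a b | r a x} := ⟨left_mem_Icc.2 hab, hrefl⟩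
  obtain ⟨m, hm⟩ : ∃ m, IsLUB {x ∈ Icc a b | r a x} m :=
    ⟨_, isLUB_csSup ⟨a, haS⟩ ⟨b, fun _ hx => hx.1.2⟩⟩
  have ham : a ≤ m := hm.1 haS
  have hmb : m ≤ b := hm.2 fun _ hx => hx.1.2
  have hrm : r a m := by
    by_contra hcon
    have ham' : a < m := ham.lt_of_ne fun h => hcon (h ▸ hrefl)
    obtain ⟨l, hl, hsub⟩ :=
      (mem_nhdsLT_iff_exists_Ioo_subset' ham').1 (hleft m ⟨ham', hmb⟩)
    obtain ⟨x, hx, hlx, hxm⟩ := hm.exists_between' (fun h => hcon h.2) hl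
    exact hcon (htrans hx.2 (hsub ⟨hlx, hxm⟩))
  rcases hmb.eq_or_lt with rfl | hmb'
  · exact hrm
  · have := nhdsGT_neBot_of_exists_gt ⟨b, hmb'⟩
    obtain ⟨x, hrx, hx⟩ := ((hright m ⟨ham, hmb'⟩).and (Ioo_mem_nhdsGT hmb')).exists
    exact absurd (hm.1 ⟨⟨ham.trans hx.1.le, hx.2.le⟩, htrans hrm hrx⟩) hx.1.not_ge

theorem exists_castSucc_and_not_succ {m : ℕ} {p : Fin (m + 1) → Prop} (h0 : p 0)
    (hlast : ¬p (Fin.last m)) : ∃ j : Fin m, p j.castSucc ∧ ¬p j.succ := by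
  by_contra! hcon
  exact hlast (Fin.induction (motive := p) h0 hcon _)

theorem insertNth_image_Icc_removeNth {X : Type*} [PartialOrder X] {n : ℕ} {i : Fin (n + 1)}
    {p q : Fin (n + 1) → X} (h : p i = q i) :
    (fun x : Fin n → X => (i.insertNth (p i) x : Fin (n + 1) → X)) ''
      Icc (i.removeNth p) (i.removeNth q) = Icc p q := by
  ext x
  simp only [mem_image]
  constructor
  · rintro ⟨y, hy, rfl⟩
    exact Fin.insertNth_mem_Icc.2 ⟨⟨le_rfl, h.le⟩, hy⟩
  · rintro ⟨hp, hq⟩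
    have hxi : p i = x i := (hp i).antisymm ((hq i).trans h.ge)
    exact ⟨i.removeNth x, ⟨fun j => hp _, fun j => hq _⟩, by
      rw [hxi, Fin.insertNth_self_removeNth]⟩

theorem continuousOn_of_monotoneOn_of_continuousOn_sum {X ι : Type*} [TopologicalSpace X]
    [LinearOrder X] [Fintype ι] {f : ι → X → ℝ} {s : Set X} (hf : ∀ i, MonotoneOn (f i) s)
    (hsum : ContinuousOn (fun x => ∑ i, f i x) s) (i : ι) : ContinuousOn (f i) s := by
  have hle : ∀ x ∈ s, ∀ y ∈ s, x ≤ y → |f i y - f i x| ≤ |∑ j, f j y - ∑ j, f j x| := by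
    intro x hx y hy hxy
    have hnonneg : ∀ j, 0 ≤ f j y - f j x := fun j => sub_nonneg.2 (hf j hx hy hxy)
    rw [← Finset.sum_sub_distrib, abs_of_nonneg (hnonneg i)]
    exact (Finset.single_le_sum (f := fun j => f j y - f j x) (fun j _ => hnonneg j)
      (Finset.mem_univ i)).trans (le_abs_self _)
  intro x hx
  refine tendsto_iff_dist_tendsto_zero.2 <| squeeze_zero' (.of_forall fun _ => dist_nonneg) ?_
    (tendsto_iff_dist_tendsto_zero.1 (hsum x hx))
  filter_upwards [self_mem_nhdsWithin] with y hy
  simp only [Real.dist_eq]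
  rcases le_total x y with hxy | hyx
  · exact hle x hx y hy hxy
  · rw [abs_sub_comm, abs_sub_comm (∑ j, f j y)]
    exact hle y hy x hx hyx

end Order

section Corner

variable {ι : Type*}

/-- The corner of the cube `[0,1]^ι` with coordinates in `{0,1}` encoded by Booleans. -/
def corner (g : ι → Bool) : ι → I := fun i => if g i then 1 else 0

/-- The coordinatewise floor of a point of the cube: the least corner of the face of `[0,1]^ι`
containing the point in its relative interior. -/
noncomputable def boolFloor (x : ι → I) : ι → Bool := fun i => decide (x i = 1)

/-- The coordinatewise ceiling of a point of the cube: the greatest corner of the face of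
`[0,1]^ι` containing the point in its relative interior. -/
noncomputable def boolCeil (x : ι → I) : ι → Bool := fun i => decide (x i ≠ 0)

theorem gc_corner_boolFloor : GaloisConnection (corner (ι := ι)) boolFloor := by
  refine fun g x => forall_congr' fun i => ?_
  cases hg : g i <;> simp [corner, boolFloor, hg, Bool.le_iff_imp, unitInterval.le_one'.ge_iff_eq]

theorem gc_boolCeil_corner : GaloisConnection boolCeil (corner (ι := ι)) := by
  refine fun x g => forall_congr' fun i => ?_
  cases hg : g i <;> simp [corner, boolCeil, hg, Bool.le_iff_imp, unitInterval.le_one']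

theorem boolFloor_le_boolCeil (x : ι → I) : boolFloor x ≤ boolCeil x := by
  intro i
  by_cases hx : x i = 1 <;> simp [boolFloor, boolCeil, hx]

theorem eventually_boolFloor_le [Finite ι] (x : ι → I) :
    ∀ᶠ y in 𝓝 x, boolFloor y ≤ boolFloor x := by
  refine eventually_all.2 fun i => ?_
  by_cases hx : x i = 1
  · exact .of_forall fun y => by simp [boolFloor, hx, Bool.le_true]
  · filter_upwards [(continuous_apply i).continuousAt.eventually_ne hx] with y hy
    simp [boolFloor, hy]

theorem eventually_le_boolCeil [Finite ι] (x : ι → I) :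
    ∀ᶠ y in 𝓝 x, boolCeil x ≤ boolCeil y := by
  refine eventually_all.2 fun i => ?_
  by_cases hx : x i = 0
  · exact .of_forall fun y => by simp [boolCeil, hx]
  · filter_upwards [(continuous_apply i).continuousAt.eventually_ne hx] with y hy
    simp [boolCeil, hy, Bool.le_true]

end Corner

namespace PCS

variable {K : PCS}

/-- The vertex of the cube `c` at the corner `g`. -/
def vert (K : PCS) : ∀ {n : ℕ}, K.cube n → (Fin n → Bool) → K.cube 0
  | 0, c, _ => c
  | _ + 1, c, g => K.vert (K.face (g 0) 0 c) (g ∘ Fin.succ)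

theorem vert_face : ∀ {n : ℕ} (ε : Bool) (i : Fin (n + 1)) (c : K.cube (n + 1))
    (g : Fin n → Bool), K.vert (K.face ε i c) g = K.vert c (i.insertNth ε g)
  | n, ε, i, c, g => by
    cases i using Fin.cases with
    | zero => rw [Fin.insertNth_zero']; rfl
    | succ j =>
      cases n with
      | zero => exact j.elim0
      | succ n =>
        obtain ⟨a, g, rfl⟩ : ∃ a g', g = Fin.cons a g' := ⟨_, _, (Fin.cons_self_tail g).symm⟩
        have hcomm : K.face a 0 (K.face ε j.succ c) = K.face ε j (K.face a 0 c) :=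
          K.comm a ε 0 j.succ j.succ_pos c
        calc K.vert (K.face ε j.succ c) (Fin.cons a g)
            = K.vert (K.face ε j (K.face a 0 c)) g := congrArg (K.vert · g) hcomm
          _ = K.vert (K.face a 0 c) (j.insertNth ε g) := vert_face ε j _ g
          _ = K.vert c (j.succ.insertNth ε (Fin.cons a g)) := by
            rw [Fin.insertNth_succ_cons]; rfl

theorem dfaceAux_const_heq (ε : Bool) : ∀ {n : ℕ} (c : K.cube n),
    K.dfaceAux n 0 (fun _ => some ε) c ≍ K.vert c fun _ => ε
  | 0, _ => cast_heq _ _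
  | n + 1, c => by
    have hlast : K.vert (K.face ε (Fin.last n) c) (fun _ => ε) = K.vert c fun _ => ε := by
      rw [vert_face]
      congr 1
      exact Fin.insertNth_eq_iff.2 ⟨rfl, rfl⟩
    rw [← hlast]
    exact (cast_heq _ _).trans (dfaceAux_const_heq ε _)

theorem extreme_eq_vert (ε : Bool) {n : ℕ} (c : K.cube n) :
    K.extreme ε c = K.vert c fun _ => ε :=
  eq_of_heq <| (cast_heq _ _).trans <| (cast_heq _ _).trans <| dfaceAux_const_heq ε c

/-- The point of `|K|` with coordinates `x` in the cube `c`. -/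
def pt {n : ℕ} (c : K.cube n) (x : Fin n → I) : K.Geo := Quot.mk K.geoRel ⟨n, c, x⟩

theorem pt_face {n : ℕ} (ε : Bool) (i : Fin (n + 1)) (c : K.cube (n + 1)) (x : Fin n → I) :
    pt (K.face ε i c) x = pt c (i.insertNth (if ε then 1 else 0) x) :=
  Quot.sound ⟨n, ε, i, c, x, .inl ⟨rfl, rfl⟩⟩

theorem pt_corner : ∀ {n : ℕ} (c : K.cube n) (g : Fin n → Bool),
    pt c (corner g) = K.vpt (K.vert c g)
  | 0, c, _ => congrArg (pt c) (Subsingleton.elim _ _)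
  | n + 1, c, g => by
    rw [vert, ← pt_corner, pt_face, Fin.insertNth_zero']
    exact congrArg (pt c) (Fin.cons_self_tail (corner g)).symm

/-- The vertex of `K` obtained by rounding all coordinates of a point of `|K|` with `r`, the common
form of `lower` and `upper`. -/
def roundVertex (r : I → Bool) (h0 : r 0 = false) (h1 : r 1 = true) : K.Geo → K.cube 0 :=
  Quot.lift (fun p => K.vert p.2.1 (r ∘ p.2.2)) <| by
    have hr : ∀ {n : ℕ} (ε : Bool) (i : Fin (n + 1)) (c : K.cube (n + 1)) (x : Fin n → I),
        K.vert (K.face ε i c) (r ∘ x) =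
          K.vert c (r ∘ (i.insertNth (if ε then 1 else 0) x : Fin (n + 1) → I)) := by
      intro n ε i c x
      rw [vert_face]
      congr 1
      refine Fin.insertNth_eq_iff.2 ⟨?_, ?_⟩
      · cases ε <;> simp [h0, h1]
      · ext k; simp [Fin.removeNth]
    rintro _ _ ⟨n, ε, i, c, x, ⟨rfl, rfl⟩ | ⟨rfl, rfl⟩⟩
    exacts [hr ε i c x, (hr ε i c x).symm]

/-- The initial vertex of the carrier of a point of `|K|`. -/
noncomputable def lower : K.Geo → K.cube 0 :=
  roundVertex (fun t => decide (t = 1)) (by simp) (by simp)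

/-- The final vertex of the carrier of a point of `|K|`. -/
noncomputable def upper : K.Geo → K.cube 0 :=
  roundVertex (fun t => decide (t ≠ 0)) (by simp) (by simp)

theorem lower_pt {n : ℕ} (c : K.cube n) (x : Fin n → I) :
    lower (pt c x) = K.vert c (boolFloor x) := rfl

theorem upper_pt {n : ℕ} (c : K.cube n) (x : Fin n → I) :
    upper (pt c x) = K.vert c (boolCeil x) := rfl

theorem lower_vpt (u : K.cube 0) : lower (K.vpt u) = u := rfl

theorem upper_vpt (u : K.cube 0) : upper (K.vpt u) = u := rfl

/-- `k` is the face of the cube `c` spanned by the corners `P ≤ Q`, as witnessed by the vertices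
and the points of `k`; no combinatorial face map is recorded. -/
structure IsFace {m n : ℕ} (k : K.cube m) (c : K.cube n) (P Q : Fin n → Bool) : Prop where
  exists_orderEmbedding : ∃ e : (Fin m → Bool) ↪o (Fin n → Bool),
    range e = Icc P Q ∧ ∀ g, K.vert k g = K.vert c (e g)
  cubeSet_eq : K.cubeSet k = pt c '' Icc (corner P) (corner Q)

theorem IsFace.refl {n : ℕ} (c : K.cube n) : IsFace c c ⊥ ⊤ where
  exists_orderEmbedding := ⟨RelEmbedding.refl _, by simp, fun _ => rfl⟩
  cubeSet_eq := by
    have h : Icc (corner (⊥ : Fin n → Bool)) (corner ⊤) = univ :=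
      eq_univ_of_forall fun x => ⟨gc_corner_boolFloor.le_iff_le.2 bot_le,
        gc_boolCeil_corner.le_iff_le.1 le_top⟩
    rw [h, image_univ]
    rfl

theorem IsFace.of_face {m n : ℕ} {k : K.cube m} {c : K.cube (n + 1)} {i : Fin (n + 1)}
    {P Q : Fin (n + 1) → Bool} (hPQ : P i = Q i)
    (hk : IsFace k (K.face (P i) i c) (i.removeNth P) (i.removeNth Q)) : IsFace k c P Q where
  exists_orderEmbedding := by
    obtain ⟨e, he, hv⟩ := hk.exists_orderEmbedding
    refine ⟨e.trans (OrderEmbedding.ofMapLEIff (fun g => i.insertNth (P i) g) fun g g' => ?_),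
      ?_, fun g => ?_⟩
    · exact Fin.insertNth_le_iff.trans (by simp)
    · rw [← insertNth_image_Icc_removeNth hPQ, ← he, ← range_comp]
      rfl
    · rw [hv, vert_face]
      rfl
  cubeSet_eq := by
    have hPQ' : corner P i = corner Q i := by simp only [corner, hPQ]
    rw [hk.cubeSet_eq, ← insertNth_image_Icc_removeNth hPQ', image_image]
    exact image_congr fun x _ => pt_face _ _ _ _

theorem exists_isFace {n : ℕ} (c : K.cube n) {P Q : Fin n → Bool} (hPQ : P ≤ Q) :
    ∃ (m : ℕ) (k : K.cube m), IsFace k c P Q := by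
  by_cases h : ∃ i, P i = Q i
  · obtain ⟨i, hi⟩ := h
    cases n with
    | zero => exact i.elim0
    | succ n =>
      obtain ⟨m, k, hk⟩ := exists_isFace (K.face (P i) i c) (P := i.removeNth P)
        (Q := i.removeNth Q) fun j => hPQ _
      exact ⟨m, k, hk.of_face hi⟩
  · push Not at h
    have hlt : ∀ i, P i = ⊥ ∧ Q i = ⊤ := fun i => Bool.lt_iff.1 ((hPQ i).lt_of_ne (h i))
    obtain rfl : P = ⊥ := funext fun i => (hlt i).1
    obtain rfl : Q = ⊤ := funext fun i => (hlt i).2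
    exact ⟨n, c, .refl c⟩

namespace IsFace

variable {m n : ℕ} {k : K.cube m} {c : K.cube n} {P Q : Fin n → Bool}

theorem extreme_false (hk : IsFace k c P Q) : K.extreme false k = K.vert c P := by
  obtain ⟨e, he, hv⟩ := hk.exists_orderEmbedding
  have he0 : e ⊥ ∈ Icc P Q := he ▸ mem_range_self ⊥
  obtain ⟨g, hg⟩ : P ∈ range e := he ▸ left_mem_Icc.2 (he0.1.trans he0.2)
  have heq : e ⊥ = P := (hg ▸ e.monotone bot_le : e ⊥ ≤ P).antisymm he0.1
  rw [extreme_eq_vert, ← heq]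
  exact hv _

theorem extreme_true (hk : IsFace k c P Q) : K.extreme true k = K.vert c Q := by
  obtain ⟨e, he, hv⟩ := hk.exists_orderEmbedding
  have he1 : e ⊤ ∈ Icc P Q := he ▸ mem_range_self ⊤
  obtain ⟨g, hg⟩ : Q ∈ range e := he ▸ right_mem_Icc.2 (he1.1.trans he1.2)
  have heq : e ⊤ = Q := he1.2.antisymm (hg ▸ e.monotone le_top)
  rw [extreme_eq_vert, ← heq]
  exact hv _

end IsFace

theorem Proper.eq_of_extreme_eq (hK : K.Proper) {c d : Σ n, K.cube n}
    (h0 : K.extreme false c.2 = K.extreme false d.2)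
    (h1 : K.extreme true c.2 = K.extreme true d.2) : c = d :=
  hK (by simp only [h0, h1])

theorem Proper.isFace (hK : K.Proper) {m n : ℕ} {k : K.cube m} {c : K.cube n}
    {P Q : Fin n → Bool} (hPQ : P ≤ Q) (h0 : K.extreme false k = K.vert c P)
    (h1 : K.extreme true k = K.vert c Q) : IsFace k c P Q := by
  obtain ⟨m', k', hface⟩ := exists_isFace c hPQ
  cases hK.eq_of_extreme_eq (c := ⟨m, k⟩) (d := ⟨m', k'⟩) (h0.trans hface.extreme_false.symm)
    (h1.trans hface.extreme_true.symm)
  exact hface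

/-- The faces `[P, Q]` of `c` and `[P', Q']` of `d` are one and the same cube by properness, so
their vertices correspond. -/
theorem Proper.exists_vert_eq (hK : K.Proper) {m n : ℕ} {c : K.cube m} {d : K.cube n}
    {P Q : Fin m → Bool} {P' Q' : Fin n → Bool} (hPQ' : P' ≤ Q') (hP : K.vert c P = K.vert d P')
    (hQ : K.vert c Q = K.vert d Q') {L M : Fin m → Bool} (hPL : P ≤ L) (hLM : L ≤ M)
    (hMQ : M ≤ Q) :
    ∃ L' M', P' ≤ L' ∧ L' ≤ M' ∧ M' ≤ Q' ∧ K.vert d L' = K.vert c L ∧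
      K.vert d M' = K.vert c M := by
  obtain ⟨_, k, hkc⟩ := exists_isFace c (hPL.trans (hLM.trans hMQ))
  have hkd : IsFace k d P' Q' :=
    hK.isFace hPQ' (hkc.extreme_false.trans hP) (hkc.extreme_true.trans hQ)
  obtain ⟨e, he, hec⟩ := hkc.exists_orderEmbedding
  obtain ⟨f, hf, hfd⟩ := hkd.exists_orderEmbedding
  obtain ⟨a, rfl⟩ : L ∈ range e := he ▸ ⟨hPL, hLM.trans hMQ⟩
  obtain ⟨b, rfl⟩ : M ∈ range e := he ▸ ⟨hPL.trans hLM, hMQ⟩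
  have hmem : ∀ g, f g ∈ Icc P' Q' := fun g => hf ▸ mem_range_self g
  exact ⟨f a, f b, (hmem a).1, f.monotone (e.le_iff_le.1 hLM), (hmem b).2,
    (hfd a).symm.trans (hec a), (hfd b).symm.trans (hec b)⟩

/-- The vertices `u` and `v` are the extreme vertices of a face of the cube `c`. -/
def VertLE {n : ℕ} (c : K.cube n) (u v : K.cube 0) : Prop :=
  ∃ P Q, P ≤ Q ∧ K.vert c P = u ∧ K.vert c Q = v

namespace VertLE

variable {n : ℕ} {c : K.cube n} {u v w : K.cube 0} {P Q : Fin n → Bool}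

theorem exists_ge (hK : K.Proper) (huv : VertLE c u v) (hP : K.vert c P = u) :
    ∃ Q, P ≤ Q ∧ K.vert c Q = v := by
  obtain ⟨P', Q', hPQ', rfl, rfl⟩ := huv
  obtain ⟨_, Q, hPL, hLQ, -, -, hQ⟩ :=
    hK.exists_vert_eq (Q := ⊤) (Q' := ⊤) le_top hP.symm rfl le_rfl hPQ' le_top
  exact ⟨Q, hPL.trans hLQ, hQ⟩

theorem exists_le (hK : K.Proper) (huv : VertLE c u v) (hQ : K.vert c Q = v) :
    ∃ P, P ≤ Q ∧ K.vert c P = u := by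
  obtain ⟨P', Q', hPQ', rfl, rfl⟩ := huv
  obtain ⟨P, _, -, hPM, hMQ, hP, -⟩ :=
    hK.exists_vert_eq (P := ⊥) (P' := ⊥) bot_le rfl hQ.symm bot_le hPQ' le_rfl
  exact ⟨P, hPM.trans hMQ, hP⟩

theorem trans (hK : K.Proper) (huv : VertLE c u v) (hvw : VertLE c v w) : VertLE c u w := by
  obtain ⟨P, Q, hPQ, hP, hQ⟩ := huv
  obtain ⟨R, hQR, hR⟩ := hvw.exists_ge hK hQ
  exact ⟨P, R, hPQ.trans hQR, hP, hR⟩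

theorem of_pt_mem_cubeSet (hK : K.Proper) {m : ℕ} {d : K.cube m} {x : Fin m → I}
    (hx : pt d x ∈ K.cubeSet c) {L M : Fin m → Bool} (hL : boolFloor x ≤ L) (hLM : L ≤ M)
    (hM : M ≤ boolCeil x) : VertLE c (K.vert d L) (K.vert d M) := by
  obtain ⟨y, hy⟩ := hx
  obtain ⟨L', M', -, hLM', -, hL', hM'⟩ :=
    hK.exists_vert_eq (c := d) (d := c) (boolFloor_le_boolCeil y)
      (congrArg lower hy).symm (congrArg upper hy).symm hL hLM hM
  exact ⟨L', M', hLM', hL', hM'⟩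

end VertLE

/-- Inside the cube `c`, the carrier of `q` starts and ends no earlier than the carrier of `p`. -/
structure CarrierLE {n : ℕ} (c : K.cube n) (p q : K.Geo) : Prop where
  lower : VertLE c (lower p) (lower q)
  upper : VertLE c (upper p) (upper q)

theorem CarrierLE.refl {n : ℕ} {c : K.cube n} {p : K.Geo} (hp : p ∈ K.cubeSet c) :
    CarrierLE c p p := by
  obtain ⟨x, rfl⟩ := hp
  exact ⟨⟨_, _, le_rfl, rfl, rfl⟩, ⟨_, _, le_rfl, rfl, rfl⟩⟩

theorem CarrierLE.trans (hK : K.Proper) {n : ℕ} {c : K.cube n} {p q r : K.Geo}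
    (hpq : CarrierLE c p q) (hqr : CarrierLE c q r) : CarrierLE c p r :=
  ⟨hpq.lower.trans hK hqr.lower, hpq.upper.trans hK hqr.upper⟩

/-- A directed move from `p` to `q` within a cube such that the carrier of `p` is a lower face of
the carrier of `q`. -/
def LowerStep (p q : K.Geo) : Prop :=
  ∃ (n : ℕ) (c : K.cube n) (x y : Fin n → I),
    x ≤ y ∧ boolFloor x = boolFloor y ∧ p = pt c x ∧ q = pt c y

/-- A directed move from `p` to `q` within a cube such that the carrier of `q` is an upper face of
the carrier of `p`. -/
def UpperStep (p q : K.Geo) : Prop :=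
  ∃ (n : ℕ) (c : K.cube n) (x y : Fin n → I),
    x ≤ y ∧ boolCeil x = boolCeil y ∧ p = pt c x ∧ q = pt c y

theorem LowerStep.lower_eq {p q : K.Geo} (hpq : LowerStep p q) : lower p = lower q := by
  obtain ⟨n, c, x, y, -, hfloor, rfl, rfl⟩ := hpq
  rw [lower_pt, lower_pt, hfloor]

theorem UpperStep.upper_eq {p q : K.Geo} (hpq : UpperStep p q) : upper p = upper q := by
  obtain ⟨n, c, x, y, -, hceil, rfl, rfl⟩ := hpq
  rw [upper_pt, upper_pt, hceil]

theorem LowerStep.carrierLE (hK : K.Proper) {p q : K.Geo} (hpq : LowerStep p q) {n : ℕ}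
    {c : K.cube n} (hq : q ∈ K.cubeSet c) : CarrierLE c p q := by
  obtain ⟨m, d, x, y, hxy, hfloor, rfl, rfl⟩ := hpq
  have hle : boolFloor y ≤ boolCeil x := hfloor ▸ boolFloor_le_boolCeil x
  have hceil : boolCeil x ≤ boolCeil y := gc_boolCeil_corner.monotone_l hxy
  exact ⟨.of_pt_mem_cubeSet hK hq hfloor.ge hfloor.le (boolFloor_le_boolCeil y),
    .of_pt_mem_cubeSet hK hq hle hceil le_rfl⟩

theorem UpperStep.carrierLE (hK : K.Proper) {p q : K.Geo} (hpq : UpperStep p q) {n : ℕ}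
    {c : K.cube n} (hp : p ∈ K.cubeSet c) : CarrierLE c p q := by
  obtain ⟨m, d, x, y, hxy, hceil, rfl, rfl⟩ := hpq
  have hle : boolFloor y ≤ boolCeil x := hceil ▸ boolFloor_le_boolCeil y
  have hfloor : boolFloor x ≤ boolFloor y := gc_corner_boolFloor.monotone_u hxy
  exact ⟨.of_pt_mem_cubeSet hK hp le_rfl hfloor hle,
    .of_pt_mem_cubeSet hK hp (boolFloor_le_boolCeil x) hceil.le hceil.ge⟩

/-- The combinatorial form of directedness on `[a, b]`: just after each time the path `α` is in a
cell of which its current cell is a lower face, and just before, in one of which it is an upper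
face. -/
structure IsCellwiseDirectedOn (α : ℝ → K.Geo) (a b : ℝ) : Prop where
  eventually_lowerStep : ∀ s ∈ Ico a b, ∀ᶠ t in 𝓝[>] s, LowerStep (α s) (α t)
  eventually_upperStep : ∀ s ∈ Ioc a b, ∀ᶠ t in 𝓝[<] s, UpperStep (α t) (α s)

namespace IsCellwiseDirectedOn

variable {α : ℝ → K.Geo} {a b : ℝ}

theorem mono (hα : IsCellwiseDirectedOn α a b) {a' b' : ℝ} (ha : a ≤ a') (hb : b' ≤ b) :
    IsCellwiseDirectedOn α a' b' where
  eventually_lowerStep s hs := hα.eventually_lowerStep s ⟨ha.trans hs.1, hs.2.trans_le hb⟩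
  eventually_upperStep s hs := hα.eventually_upperStep s ⟨ha.trans_lt hs.1, hs.2.trans hb⟩

theorem carrierLE (hK : K.Proper) (hα : IsCellwiseDirectedOn α a b) (hab : a ≤ b) {n : ℕ}
    {c : K.cube n} (hc : MapsTo α (Icc a b) (K.cubeSet c)) : CarrierLE c (α a) (α b) := by
  refine rel_of_eventually_nhdsGT_nhdsLT (r := fun s t => CarrierLE c (α s) (α t)) hab
    (.refl (hc (left_mem_Icc.2 hab))) (fun _ _ _ => .trans hK) (fun s hs => ?_) fun s hs => ?_
  · filter_upwards [hα.eventually_lowerStep s hs, Icc_mem_nhdsGT_of_mem hs] with t hst ht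
    exact hst.carrierLE hK (hc ht)
  · filter_upwards [hα.eventually_upperStep s hs, Icc_mem_nhdsLT_of_mem hs] with t hts ht
    exact hts.carrierLE hK (hc ht)

theorem exists_mem_cubeSet (hK : K.Proper) (hα : IsCellwiseDirectedOn α a b) {n : ℕ}
    {c : K.cube n} (hc : MapsTo α (Icc a b) (K.cubeSet c)) {r : ℝ} (hr : r ∈ Icc a b) :
    ∃ k : Σ m, K.cube m, K.extreme false k.2 = lower (α a) ∧
      K.extreme true k.2 = upper (α b) ∧ α r ∈ K.cubeSet k.2 := by
  have har : CarrierLE c (α a) (α r) :=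
    (hα.mono le_rfl hr.2).carrierLE hK hr.1 (hc.mono_left (Icc_subset_Icc_right hr.2))
  have hrb : CarrierLE c (α r) (α b) :=
    (hα.mono hr.1 le_rfl).carrierLE hK hr.2 (hc.mono_left (Icc_subset_Icc_left hr.1))
  obtain ⟨x, hx⟩ : ∃ x, pt c x = α r := hc hr
  rw [← hx] at har hrb ⊢
  obtain ⟨P, hPx, hP⟩ := har.lower.exists_le hK (lower_pt c x).symm
  obtain ⟨Q, hxQ, hQ⟩ := hrb.upper.exists_ge hK (upper_pt c x).symm
  obtain ⟨m, k, hk⟩ := exists_isFace c (hPx.trans ((boolFloor_le_boolCeil x).trans hxQ))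
  refine ⟨⟨m, k⟩, hk.extreme_false.trans hP, hk.extreme_true.trans hQ, ?_⟩
  rw [hk.cubeSet_eq]
  exact mem_image_of_mem _ ⟨(gc_corner_boolFloor P x).2 hPx, (gc_boolCeil_corner x Q).1 hxQ⟩

end IsCellwiseDirectedOn

theorem vpt_extreme_mem_cubeSet (ε : Bool) {n : ℕ} (c : K.cube n) :
    K.vpt (K.extreme ε c) ∈ K.cubeSet c :=
  ⟨corner fun _ => ε, by rw [extreme_eq_vert]; exact pt_corner c _⟩

theorem TameOn.mono {α : ℝ → K.Geo} {a b a' b' : ℝ} (hα : K.TameOn α a b) (ha : a ≤ a')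
    (hb : b' ≤ b) : K.TameOn α a' b' :=
  fun s t hs hst ht => hα s t (ha.trans hs) hst (ht.trans hb)

/-- Tameness yields a cube only on closed subintervals of `(a, b)`; the cubes found for these all
have extreme vertices `u` and `v`, hence coincide. -/
theorem IsCellwiseDirectedOn.exists_mapsTo_cubeSet (hK : K.Proper) {α : ℝ → K.Geo} {a b : ℝ}
    (hab : a < b) (hα : IsCellwiseDirectedOn α a b) (htame : K.TameOn α a b) {u v : K.cube 0}
    (hu : α a = K.vpt u) (hv : α b = K.vpt v) (hvert : ∀ s ∈ Ioo a b, ∀ z, α s ≠ K.vpt z) :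
    ∃ k : Σ m, K.cube m, K.extreme false k.2 = u ∧ K.extreme true k.2 = v ∧
      MapsTo α (Icc a b) (K.cubeSet k.2) := by
  have hmem : ∀ s ∈ Ioo a b, ∃ k : Σ m, K.cube m,
      K.extreme false k.2 = u ∧ K.extreme true k.2 = v ∧ α s ∈ K.cubeSet k.2 := by
    intro s hs
    obtain ⟨a', ha', haa', has⟩ := ((hα.eventually_lowerStep a ⟨le_rfl, hab⟩).and
      (Ioo_mem_nhdsGT hs.1)).exists
    obtain ⟨b', hb', hsb, hbb'⟩ := ((hα.eventually_upperStep b ⟨hab, le_rfl⟩).and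
      (Ioo_mem_nhdsLT hs.2)).exists
    have hlower : lower (α a') = u := by rw [← ha'.lower_eq, hu, lower_vpt]
    have hupper : upper (α b') = v := by rw [hb'.upper_eq, hv, upper_vpt]
    rcases htame a' b' haa'.le (has.trans hsb) hbb'.le with ⟨n, c, hc⟩ | ⟨z, r, hr, hz⟩
    · rw [← hlower, ← hupper]
      exact (hα.mono haa'.le hbb'.le).exists_mem_cubeSet hK hc ⟨has.le, hsb.le⟩
    · exact absurd hz (hvert r ⟨haa'.trans_le hr.1, hr.2.trans_lt hbb'⟩ z)
  obtain ⟨r, hr⟩ := exists_between hab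
  obtain ⟨k, rfl, rfl, -⟩ := hmem r hr
  refine ⟨k, rfl, rfl, fun s hs => ?_⟩
  rcases eq_endpoints_or_mem_Ioo_of_mem_Icc hs with rfl | rfl | hs
  · exact hu ▸ vpt_extreme_mem_cubeSet _ _
  · exact hv ▸ vpt_extreme_mem_cubeSet _ _
  · obtain ⟨k', h0, h1, hsk⟩ := hmem s hs
    rwa [hK.eq_of_extreme_eq h0 h1] at hsk

/-- On `[a, b]` the path `α` runs inside the cube `c`, with continuous non-decreasing
coordinates `β`. -/
structure IsMonotoneLift {n : ℕ} (c : K.cube n) (β : ℝ → Fin n → I) (α : ℝ → K.Geo)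
    (a b : ℝ) : Prop where
  continuousOn : ContinuousOn β (Icc a b)
  monotoneOn : MonotoneOn β (Icc a b)
  eq_pt : ∀ s ∈ Icc a b, α s = pt c (β s)

namespace IsMonotoneLift

variable {n : ℕ} {c : K.cube n} {β : ℝ → Fin n → I} {α : ℝ → K.Geo} {a b s : ℝ}

theorem eventually_lowerStep (hβ : IsMonotoneLift c β α a b) (hs : s ∈ Ico a b) :
    ∀ᶠ t in 𝓝[>] s, LowerStep (α s) (α t) := by
  have hs' : s ∈ Icc a b := Ico_subset_Icc_self hs
  have hcont : Tendsto β (𝓝[>] s) (𝓝 (β s)) :=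
    (hβ.continuousOn s hs').mono_left (nhdsWithin_le_of_mem (Icc_mem_nhdsGT_of_mem hs))
  filter_upwards [hcont.eventually (eventually_boolFloor_le (β s)), Icc_mem_nhdsGT_of_mem hs,
    self_mem_nhdsWithin] with t hfloor ht hst
  have hle : β s ≤ β t := hβ.monotoneOn hs' ht (mem_Ioi.1 hst).le
  exact ⟨n, c, β s, β t, hle, (gc_corner_boolFloor.monotone_u hle).antisymm hfloor,
    hβ.eq_pt s hs', hβ.eq_pt t ht⟩

theorem eventually_upperStep (hβ : IsMonotoneLift c β α a b) (hs : s ∈ Ioc a b) :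
    ∀ᶠ t in 𝓝[<] s, UpperStep (α t) (α s) := by
  have hs' : s ∈ Icc a b := Ioc_subset_Icc_self hs
  have hcont : Tendsto β (𝓝[<] s) (𝓝 (β s)) :=
    (hβ.continuousOn s hs').mono_left (nhdsWithin_le_of_mem (Icc_mem_nhdsLT_of_mem hs))
  filter_upwards [hcont.eventually (eventually_le_boolCeil (β s)), Icc_mem_nhdsLT_of_mem hs,
    self_mem_nhdsWithin] with t hceil ht hts
  have hle : β t ≤ β s := hβ.monotoneOn ht hs' (mem_Iio.1 hts).le
  exact ⟨n, c, β t, β s, hle, (gc_boolCeil_corner.monotone_l hle).antisymm hceil,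
    hβ.eq_pt t ht, hβ.eq_pt s hs'⟩

end IsMonotoneLift

section Natural

variable {h : ∀ {n : ℕ}, K.cube n → ℤ} {α : ℝ → K.Geo} {a b : ℝ}

theorem NaturalOn.mono (hα : K.NaturalOn h α a b) {a' b' : ℝ} (ha : a ≤ a') (hb : b' ≤ b) :
    K.NaturalOn h α a' b' :=
  fun s hs => hα s ⟨ha.trans hs.1, hs.2.trans hb⟩

theorem NaturalOn.height_eq (hα : K.NaturalOn h α a b) {s : ℝ} (hs : s ∈ Icc a b)
    {u : K.cube 0} (hu : α s = K.vpt u) : (h u : ℝ) = s := by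
  simpa using hα s hs 0 u Fin.elim0 hu.symm

/-- The coordinates of a natural path add up to an affine function of time, so being monotone
they are continuous. -/
theorem NaturalOn.isMonotoneLift (hα : K.NaturalOn h α a b) {n : ℕ} {c : K.cube n}
    {β : ℝ → Fin n → I} (hmono : ∀ i, MonotoneOn (fun s => (β s i : ℝ)) (Icc a b))
    (hβ : ∀ s ∈ Icc a b, α s = pt c (β s)) : IsMonotoneLift c β α a b where
  continuousOn := by
    have hsum : ContinuousOn (fun s => ∑ i, (β s i : ℝ)) (Icc a b) :=
      (continuousOn_id.sub continuousOn_const).congr fun s hs =>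
        eq_sub_of_add_eq' (hα s hs n c (β s) (hβ s hs).symm)
    exact continuousOn_pi.2 fun i => IsInducing.subtypeVal.continuousOn_iff.2
      (continuousOn_of_monotoneOn_of_continuousOn_sum hmono hsum i)
  monotoneOn s hs t ht hst i := hmono i hs ht hst
  eq_pt := hβ

theorem IsDPathOn.isCellwiseDirectedOn (hα : K.IsDPathOn α a b) (hnat : K.NaturalOn h α a b) :
    IsCellwiseDirectedOn α a b := by
  obtain ⟨-, m, t, ht, rfl, rfl, hpieces⟩ := hα
  have hlift : ∀ j : Fin m, ∃ (n : ℕ) (c : K.cube n) (β : ℝ → Fin n → I),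
      IsMonotoneLift c β α (t j.castSucc) (t j.succ) := by
    intro j
    obtain ⟨n, c, β, hmono, hβ⟩ := hpieces j
    exact ⟨n, c, β,
      (hnat.mono (ht (Fin.zero_le _)) (ht (Fin.le_last _))).isMonotoneLift hmono hβ⟩
  constructor
  · intro s hs
    obtain ⟨j, hjs, hsj⟩ := exists_castSucc_and_not_succ (p := (t · ≤ s)) hs.1 hs.2.not_ge
    obtain ⟨n, c, β, hβ⟩ := hlift j
    exact hβ.eventually_lowerStep ⟨hjs, not_le.1 hsj⟩
  · intro s hs
    obtain ⟨j, hjs, hsj⟩ := exists_castSucc_and_not_succ (p := (t · < s)) hs.1 hs.2.not_gt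
    obtain ⟨n, c, β, hβ⟩ := hlift j
    exact hβ.eventually_upperStep ⟨hjs, not_lt.1 hsj⟩

theorem IsHeight.vert (hh : K.IsHeight h) : ∀ {n : ℕ} (c : K.cube n) (g : Fin n → Bool),
    h (K.vert c g) = h c + ∑ i, if g i then 1 else 0
  | 0, c, _ => by simp [PCS.vert]
  | n + 1, c, g => by
    rw [PCS.vert, hh.vert, Fin.sum_univ_succ, ← add_assoc]
    exact congrArg (· + _) (hh _ _ _)

theorem IsHeight.extreme_true (hh : K.IsHeight h) {n : ℕ} (c : K.cube n) :
    h (K.extreme true c) = h (K.extreme false c) + n := by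
  simp [extreme_eq_vert, hh.vert]

end Natural

theorem NaturalOn.exists_next_vertex {h : ∀ {n : ℕ}, K.cube n → ℤ} {α : ℝ → K.Geo} {N k : ℕ}
    (hα : K.NaturalOn h α 0 N) (hk : k < N) {w : K.cube 0} (hw : α N = K.vpt w) :
    ∃ l : ℕ, k < l ∧ l ≤ N ∧ (∃ u, α l = K.vpt u) ∧
      ∀ s ∈ Ioo (k : ℝ) l, ∀ z, α s ≠ K.vpt z := by
  classical
  have hex : ∃ l : ℕ, k < l ∧ ∃ u, α l = K.vpt u := ⟨N, hk, w, hw⟩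
  have hlN : Nat.find hex ≤ N := Nat.find_min' hex ⟨hk, w, hw⟩
  refine ⟨Nat.find hex, (Nat.find_spec hex).1, hlN, (Nat.find_spec hex).2, fun s hs z hz => ?_⟩
  have hs0 : 0 < s := k.cast_nonneg.trans_lt hs.1
  have hsN : s ≤ N := hs.2.le.trans (by exact_mod_cast hlN)
  have hzs : (h z : ℝ) = s := hα.height_eq ⟨hs0.le, hsN⟩ hz
  obtain ⟨j, hj⟩ := Int.eq_ofNat_of_zero_le (a := h z) (by exact_mod_cast hzs ▸ hs0.le)
  obtain rfl : (j : ℝ) = s := by rw [← hzs, hj]; simp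
  exact Nat.find_min hex (Nat.cast_lt.1 hs.2) ⟨Nat.cast_lt.1 hs.1, z, hz⟩

section Chain

variable {c : Σ n, K.cube (n + 1)} {cs : List (Σ n, K.cube (n + 1))}

theorem bsum_zero : bsum cs 0 = 0 := by simp [bsum]

theorem bsum_cons_succ (i : ℕ) : bsum (c :: cs) (i + 1) = c.1 + 1 + bsum cs i := by simp [bsum]

theorem liesIn_cons {α : ℝ → K.Geo} (hc : MapsTo α (Icc 0 (c.1 + 1)) (K.cubeSet c.2))
    (hcs : K.liesIn (fun s => α (c.1 + 1 + s)) cs) : K.liesIn α (c :: cs) := by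
  rintro (_ | i) hi
  · rw [bsum_zero, bsum_cons_succ, bsum_zero, add_zero]
    exact hc
  · intro s hs
    rw [bsum_cons_succ, bsum_cons_succ] at hs
    rw [← add_sub_cancel (c.1 + 1 : ℝ) s]
    exact hcs i (Nat.lt_of_succ_lt_succ hi)
      ⟨le_sub_iff_add_le'.2 hs.1, sub_le_iff_le_add'.2 hs.2⟩

end Chain

theorem NatTamePath.exists_chainFrom (hK : K.Proper) {h : ∀ {n : ℕ}, K.cube n → ℤ}
    (hh : K.IsHeight h) {v w u : K.cube 0} {N k : ℕ} {α : ℝ → K.Geo}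
    (hα : K.NatTamePath h v w N α) (hk : k ≤ N) (hu : α k = K.vpt u) :
    ∃ cs, K.chainFrom u cs w ∧ K.liesIn (fun s => α (k + s)) cs := by
  have ⟨hd, _, hw, hnat, htame⟩ := hα
  rcases hk.eq_or_lt with rfl | hk
  · exact ⟨[], congrArg lower (hu.symm.trans hw), fun _ hi => absurd hi (Nat.not_lt_zero _)⟩
  obtain ⟨l, hkl, hlN, ⟨u', hu'⟩, hvert⟩ := hnat.exists_next_vertex hk hw
  have hk0 : (0 : ℝ) ≤ k := k.cast_nonneg
  have hkl' : (k : ℝ) < l := Nat.cast_lt.2 hkl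
  have hlN' : (l : ℝ) ≤ N := Nat.cast_le.2 hlN
  have hdir : IsCellwiseDirectedOn α k l := (hd.isCellwiseDirectedOn hnat).mono hk0 hlN'
  obtain ⟨⟨m, c⟩, rfl, rfl, hc⟩ :=
    hdir.exists_mapsTo_cubeSet hK hkl' (htame.mono hk0 hlN') hu hu' hvert
  have hl : (l : ℝ) = k + m := by
    rw [← hnat.height_eq ⟨hk0, hkl'.le.trans hlN'⟩ hu,
      ← hnat.height_eq ⟨hk0.trans hkl'.le, hlN'⟩ hu', hh.extreme_true]
    push_cast
    rfl
  obtain rfl : l = k + m := by exact_mod_cast hl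
  obtain ⟨m, rfl⟩ := Nat.exists_eq_add_one.2 (Nat.pos_of_lt_add_right hkl)
  obtain ⟨cs, hcs, hlies⟩ := exists_chainFrom hK hh hα hlN hu'
  refine ⟨⟨m, c⟩ :: cs, ⟨rfl, hcs⟩, liesIn_cons (fun s hs => hc ?_) ?_⟩
  · push_cast
    exact ⟨le_add_of_nonneg_right hs.1, (add_le_add_iff_left _).2 hs.2⟩
  · simpa only [Nat.cast_add, Nat.cast_one, add_assoc] using hlies
termination_by N - k

end PCS

theorem stmt11_general (K : PCS) (hK : K.Proper) (h : ∀ {n : ℕ}, K.cube n → ℤ)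
    (hh : K.IsHeight h) (v w : K.cube 0) (N : ℕ) (α : ℝ → K.Geo)
    (hα : K.NatTamePath h v w N α) : ∃ c : CubeChain K v w, K.liesIn α c.1 := by
  obtain ⟨cs, hcs, hlies⟩ := hα.exists_chainFrom hK hh N.zero_le (by simpa using hα.2.1)
  exact ⟨⟨cs, hcs⟩, by simpa using hlies⟩

/-- Every natural tame path from `v` to `w` lies in some
cube chain from `v` to `w`: the sets `N(K,𝐜)`, `𝐜 ∈ Ch(K)_v^w`, cover the
space of natural tame paths. -/
theorem stmt11 (K : PCS) (hfin : Finite (Σ n, K.cube n)) (hK : K.Proper)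
    (h : ∀ {n : ℕ}, K.cube n → ℤ) (hh : K.IsHeight h)
    (v w : K.cube 0) (N : ℕ) (hv : h v = 0) (hw : h w = N)
    (α : ℝ → K.Geo) (hα : K.NatTamePath h v w N α) :
    ∃ c : CubeChain K v w, K.liesIn α c.1 :=
  stmt11_general K hK h hh v w N α hα
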